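/- arXiv:2310.02190 — 2 statements merged into one kernel-verified Lean document; each statement's English description precedes it below -/
import Mathlib

section
/- Suppose the Markov semigroup P_t satisfies (rAC)_X and that, in addition, ε₀(u₀, g) < 1/2 for every u₀ ∈ X and every g ∈ 𝓖 with |g| ≤ r(u₀). Let μ and ν be Radon probability measures on X which are invariant for P_t and mutually singular. Then the sets U₀, U₁ of the support theorem can be chosen so that, in addition to being disjoint, d_𝓖-open, Borel, and satisfying μ(U₀) = 1, ν(U₀) = 0, μ(U₁) = 0, ν(U₁) = 1, their closures in the topology induced by d_𝓖 are also disjoint. -/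
/-!
Let `K n`, `L n` be compact sets inside disjoint carriers of `μ`, `ν`, with complements of measure
at most `2⁻ⁿ`. Equicontinuity of the action puts `K n` and `L n` at positive `d_𝓖`-distance, so a
truncated multiple of the `d_𝓖`-distance to `K n` gives a `𝓖`-Lipschitz function `φ n` with values
in `[-1, 1]`, equal to `1` on `K n` and to `-1` on `L n` (`exists_separating`). Choose times `s n`
from the sequence in `(rAC)_X` so late that `δ` times the Lipschitz constant of `φ n` tends to
zero, and put `ψ n = P_{s n} (φ n)`. By invariance and summability, `ψ n → 1` holds `μ`-a.e. and
`ψ n → -1` holds `ν`-a.e. (`ae_tendsto_markov`).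

Take σ-compact sets `K' ⊆ {ψ n → 1}` and `L' ⊆ {ψ n → -1}` of full `μ`- and `ν`-measure.
As `2 ε₀ < 1`, the estimate in `(rAC)_X` shows that `ψ n` is eventually positive at each point of
the `d_𝓖`-closure of `K'` and eventually negative at each point of the `d_𝓖`-closure of `L'`
(`eventually_close`), so no point is at distance zero from both. Then
`U₀ = {2 d_𝓖(·, K') < d_𝓖(·, L')}` and `U₁ = {2 d_𝓖(·, L') < d_𝓖(·, K')}` work: they contain `K'`
and `L'`, are Borel because the distance to a compact set is Borel (`measurable_infG`), and at a
common point of their closures both distances would be finite and at most half of each other,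
hence zero (`disjoint_closures`).
-/

open MeasureTheory ENNReal Filter Topology

section

variable {X : Type*} [MetricSpace X] [MeasurableSpace X] [BorelSpace X]
variable {G : Type*} [Group G]

/-- A function `φ : X → ℝ` is bounded and Borel measurable. -/
def IsBddBorel {X : Type*} [MeasurableSpace X] (φ : X → ℝ) : Prop :=
  Measurable φ ∧ ∃ M : ℝ, ∀ x, |φ x| ≤ M

/-- `ℓ` is a length function on the group `G`. -/
structure IsLength (G : Type*) [Group G] (ℓ : G → ℝ) : Prop where
  nonneg : ∀ g, 0 ≤ ℓ g
  eq_zero_iff : ∀ g, ℓ g = 0 ↔ g = 1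
  inv : ∀ g : G, ℓ g⁻¹ = ℓ g
  mul_le : ∀ g₁ g₂, ℓ (g₁ * g₂) ≤ ℓ g₁ + ℓ g₂

/-- `τ` is an action of the group `G` on `X`. -/
structure IsAction {X : Type*} (G : Type*) [Group G] (τ : G → X → X) : Prop where
  one : ∀ x, τ 1 x = x
  mul : ∀ g₁ g₂ x, τ (g₁ * g₂) x = τ g₁ (τ g₂ x)

/-- On every compact set, `g ↦ τ_g x` is equicontinuous at the identity:
`lim_{r → 0} sup_{x ∈ K} sup_{|g| ≤ r} d(x, τ_g x) = 0`. -/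
def TauEquicont (ℓ : G → ℝ) (τ : G → X → X) : Prop :=
  ∀ K : Set X, IsCompact K → ∀ ε : ℝ, 0 < ε →
    ∃ r : ℝ, 0 < r ∧ ∀ x ∈ K, ∀ g : G, ℓ g ≤ r → dist x (τ g x) ≤ ε

/-- The images `τ(B_r × K)` of compact sets are Borel. -/
def TauMeasImage (ℓ : G → ℝ) (τ : G → X → X) : Prop :=
  ∀ r : ℝ, 0 ≤ r → ∀ K : Set X, IsCompact K →
    MeasurableSet (⋃ (g : G) (_ : ℓ g ≤ r), τ g '' K)

/-- `P` is a Markov semigroup on the bounded Borel functions. -/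
structure IsMarkovSemigroup {X : Type*} [MeasurableSpace X]
    (P : ℝ → (X → ℝ) → (X → ℝ)) : Prop where
  preserves : ∀ t, 0 ≤ t → ∀ φ : X → ℝ, IsBddBorel φ → IsBddBorel (P t φ)
  add : ∀ t, 0 ≤ t → ∀ φ ψ : X → ℝ, IsBddBorel φ → IsBddBorel ψ →
    P t (fun x => φ x + ψ x) = fun x => P t φ x + P t ψ x
  smul : ∀ t, 0 ≤ t → ∀ (c : ℝ) (φ : X → ℝ), IsBddBorel φ →
    P t (fun x => c * φ x) = fun x => c * P t φ x
  comp : ∀ t, 0 ≤ t → ∀ s, 0 ≤ s → ∀ φ : X → ℝ, IsBddBorel φ →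
    P (t + s) φ = P t (P s φ)
  pos : ∀ t, 0 ≤ t → ∀ φ : X → ℝ, IsBddBorel φ → (∀ x, 0 ≤ φ x) → ∀ x, 0 ≤ P t φ x
  map_one : ∀ t, 0 ≤ t → P t (fun _ => (1 : ℝ)) = fun _ => 1

/-- The extended distance `d_𝓖` on `X` induced by the group action:
`d_𝓖(u₁,u₂) = inf {|g| : u₁ = τ_g u₂}`, with `inf ∅ = ∞`. -/
noncomputable def dG (ℓ : G → ℝ) (τ : G → X → X) (u₁ u₂ : X) : ℝ≥0∞ :=
  ⨅ (g : G) (_ : u₁ = τ g u₂), ENNReal.ofReal (ℓ g)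

/-- `φ` is `𝓖`-Lipschitz with constant `c`. -/
def GLipWith (ℓ : G → ℝ) (τ : G → X → X) (c : ℝ) (φ : X → ℝ) : Prop :=
  ∀ u₁ u₂ : X, ENNReal.ofReal |φ u₁ - φ u₂| ≤ ENNReal.ofReal c * dG ℓ τ u₁ u₂

/-- A Borel probability measure `μ` is invariant for the Markov semigroup `P`. -/
def IsInvariantMeasure {X : Type*} [MeasurableSpace X]
    (P : ℝ → (X → ℝ) → (X → ℝ)) (μ : Measure X) : Prop :=
  ∀ t, 0 ≤ t → ∀ φ : X → ℝ, IsBddBorel φ → ∫ x, P t φ x ∂μ = ∫ x, φ x ∂μ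

/-- The asymptotic coupling property restricted to the action of `𝓖`, `(rAC)_X`,
with data `t_n`, `δ_n`, `ε₀`, `C`, `r`. -/
structure RAC (ℓ : G → ℝ) (τ : G → X → X) (P : ℝ → (X → ℝ) → (X → ℝ))
    (t : ℕ → ℝ) (δ : ℕ → ℝ) (ε₀ C : X → G → ℝ) (r : X → ℝ≥0∞) : Prop where
  t_nonneg : ∀ n, 0 ≤ t n
  delta_pos : ∀ n, 0 < δ n
  delta_lim : Tendsto δ atTop (𝓝 0)
  r_pos : ∀ u₀, 0 < r u₀
  eps_lt_one : ∀ u₀ g, ENNReal.ofReal (ℓ g) ≤ r u₀ → ε₀ u₀ g < 1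
  estimate : ∀ u₀ g, ENNReal.ofReal (ℓ g) ≤ r u₀ →
    ∀ φ : X → ℝ, IsBddBorel φ → ∀ M : ℝ, (∀ x, |φ x| ≤ M) →
      ∀ c : ℝ, 0 ≤ c → GLipWith ℓ τ c φ → ∀ n,
        |P (t n) φ u₀ - P (t n) φ (τ g u₀)| ≤ 2 * ε₀ u₀ g * M + δ n * C u₀ g * c

/-- Openness with respect to the topology induced by `d_𝓖`. -/
def DGOpen (ℓ : G → ℝ) (τ : G → X → X) (U : Set X) : Prop :=
  ∀ x ∈ U, ∃ ε : ℝ≥0∞, 0 < ε ∧ ∀ y : X, dG ℓ τ y x < ε → y ∈ U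

/-- Closure with respect to the topology induced by `d_𝓖`. -/
def DGClosure (ℓ : G → ℝ) (τ : G → X → X) (A : Set X) : Set X :=
  {x : X | ∀ ε : ℝ≥0∞, 0 < ε → ∃ y ∈ A, dG ℓ τ x y < ε}

/-! ### The extended distance to a set -/

set_option linter.unusedSectionVars false

theorem dG_comm {ℓ : G → ℝ} {τ : G → X → X} (hℓ : IsLength G ℓ) (hτ : IsAction G τ) (x y : X) :
    dG ℓ τ x y = dG ℓ τ y x := by
  have key : ∀ a b : X, dG ℓ τ a b ≤ dG ℓ τ b a := by
    intro a b
    unfold dG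
    refine le_iInf₂ fun g hg => ?_
    refine (iInf₂_le g⁻¹ ?_).trans (by rw [hℓ.inv])
    rw [hg, ← hτ.mul, inv_mul_cancel, hτ.one]
  exact le_antisymm (key x y) (key y x)

theorem dG_self {ℓ : G → ℝ} {τ : G → X → X} (hℓ : IsLength G ℓ) (hτ : IsAction G τ) (x : X) :
    dG ℓ τ x x = 0 := by
  unfold dG
  refine le_antisymm ((iInf₂_le 1 (hτ.one x).symm).trans ?_) bot_le
  rw [(hℓ.eq_zero_iff 1).2 rfl]; simp

theorem dG_triangle {ℓ : G → ℝ} {τ : G → X → X} (hℓ : IsLength G ℓ) (hτ : IsAction G τ)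
    (x y z : X) : dG ℓ τ x z ≤ dG ℓ τ x y + dG ℓ τ y z := by
  unfold dG
  simp only [ENNReal.iInf_add, ENNReal.add_iInf]
  refine le_iInf fun g => le_iInf fun hg => le_iInf fun h => le_iInf fun hh => ?_
  refine (iInf₂_le (h * g) (by rw [hτ.mul, ← hg, ← hh])).trans ?_
  rw [← ENNReal.ofReal_add (hℓ.nonneg _) (hℓ.nonneg _)]
  exact ENNReal.ofReal_le_ofReal (hℓ.mul_le _ _)

theorem exists_of_dG_lt {ℓ : G → ℝ} {τ : G → X → X} {x y : X} {s : ℝ≥0∞}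
    (h : dG ℓ τ x y < s) : ∃ g, x = τ g y ∧ ENNReal.ofReal (ℓ g) < s := by
  simpa [dG, iInf_lt_iff] using h

/-- The extended `d_𝓖`-distance from the point `x` to the set `A` (infinite if `A` is empty). -/
noncomputable def infG (ℓ : G → ℝ) (τ : G → X → X) (A : Set X) (x : X) : ℝ≥0∞ :=
  ⨅ y ∈ A, dG ℓ τ x y

theorem infG_le_dG_add {ℓ : G → ℝ} {τ : G → X → X} (hℓ : IsLength G ℓ) (hτ : IsAction G τ)
    (A : Set X) (x y : X) : infG ℓ τ A x ≤ dG ℓ τ x y + infG ℓ τ A y := by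
  unfold infG
  simp only [ENNReal.add_iInf]
  exact le_iInf₂ fun z hz => (iInf₂_le z hz).trans (dG_triangle hℓ hτ x y z)

theorem infG_eq_zero_of_mem {ℓ : G → ℝ} {τ : G → X → X} (hℓ : IsLength G ℓ) (hτ : IsAction G τ)
    {A : Set X} {x : X} (hx : x ∈ A) : infG ℓ τ A x = 0 :=
  le_antisymm ((iInf₂_le x hx).trans (dG_self hℓ hτ x).le) bot_le

theorem exists_of_infG_lt {ℓ : G → ℝ} {τ : G → X → X} {A : Set X} {x : X} {s : ℝ≥0∞}
    (h : infG ℓ τ A x < s) : ∃ y ∈ A, dG ℓ τ x y < s := by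
  simpa [infG, iInf_lt_iff] using h

/-- The sublevel sets of the distance to a compact set `K` are countable unions of the sets
`τ(B_q × K)`. -/
theorem measurable_infG {ℓ : G → ℝ} {τ : G → X → X} (hℓ : IsLength G ℓ)
    (hmeas : TauMeasImage ℓ τ) {K : Set X} (hK : IsCompact K) : Measurable (infG ℓ τ K) := by
  refine measurable_of_Iio fun s => ?_
  have : infG ℓ τ K ⁻¹' Set.Iio s = ⋃ (q : ℚ) (_ : 0 ≤ (q : ℝ) ∧ ENNReal.ofReal q < s),
      ⋃ (g : G) (_ : ℓ g ≤ q), τ g '' K := by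
    ext x
    simp only [Set.mem_preimage, Set.mem_Iio, Set.mem_iUnion, Set.mem_image, exists_prop]
    constructor
    · intro h
      obtain ⟨y, hy, hxy⟩ := exists_of_infG_lt h
      obtain ⟨g, hg, hgs⟩ := exists_of_dG_lt hxy
      obtain ⟨q, hq0, hq1, hq2⟩ := ENNReal.lt_iff_exists_rat_btwn.1 hgs
      refine ⟨q, ⟨by exact_mod_cast hq0, hq2⟩, g, ?_, y, hy, hg.symm⟩
      exact ((ENNReal.ofReal_lt_ofReal_iff_of_nonneg (hℓ.nonneg g)).1 hq1).le
    · rintro ⟨q, ⟨-, hqs⟩, g, hgq, y, hy, rfl⟩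
      have h1 : infG ℓ τ K (τ g y) ≤ dG ℓ τ (τ g y) y := iInf₂_le y hy
      have h2 : dG ℓ τ (τ g y) y ≤ ENNReal.ofReal (ℓ g) := by
        unfold dG
        exact iInf_le_of_le g (iInf_le_of_le rfl le_rfl)
      refine lt_of_le_of_lt (h1.trans h2) ?_
      exact (ENNReal.ofReal_le_ofReal hgq).trans_lt hqs
  rw [this]
  exact MeasurableSet.iUnion fun q => MeasurableSet.iUnion fun hq => hmeas q hq.1 K hK

theorem measurable_infG_iUnion {ℓ : G → ℝ} {τ : G → X → X} (hℓ : IsLength G ℓ)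
    (hmeas : TauMeasImage ℓ τ) {K : ℕ → Set X} (hK : ∀ n, IsCompact (K n)) :
    Measurable (infG ℓ τ (⋃ n, K n)) := by
  have : infG ℓ τ (⋃ n, K n) = fun x => ⨅ n, infG ℓ τ (K n) x := by
    ext x
    simp only [infG, iInf_iUnion]
  rw [this]
  exact Measurable.iInf fun n => measurable_infG hℓ hmeas (hK n)

/-! ### Separating functions -/

/-- Disjoint compact sets lie at positive `d_𝓖`-distance, by equicontinuity of the action. -/
theorem exists_le_infG {ℓ : G → ℝ} {τ : G → X → X} (hequi : TauEquicont ℓ τ)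
    {K L : Set X} (hK : IsCompact K) (hL : IsCompact L) (hKL : Disjoint K L) :
    ∃ ρ : ℝ, 0 < ρ ∧ ∀ y ∈ L, ENNReal.ofReal ρ ≤ infG ℓ τ K y := by
  obtain ⟨s, hs, hsd⟩ := Metric.exists_pos_forall_lt_edist hK hL.isClosed hKL
  obtain ⟨ρ, hρ, h⟩ := hequi K hK s (by exact_mod_cast hs)
  refine ⟨ρ, hρ, fun y hy => le_iInf₂ fun x hx => le_iInf₂ fun g hg => ?_⟩
  by_contra! hlt
  have h1 := h x hx g ((ENNReal.ofReal_lt_ofReal_iff hρ).1 hlt).le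
  have h2 := hsd x hx y hy
  rw [← hg, dist_nndist] at h1
  rw [edist_nndist] at h2
  exact absurd (lt_of_lt_of_le (ENNReal.coe_lt_coe.1 h2) (by exact_mod_cast h1)) (lt_irrefl _)

/-- Disjoint compact sets are separated by a bounded Borel `𝓖`-Lipschitz function:
truncate a multiple of the `d_𝓖`-distance to `K`. -/
theorem exists_separating {ℓ : G → ℝ} {τ : G → X → X} (hℓ : IsLength G ℓ) (hτ : IsAction G τ)
    (hequi : TauEquicont ℓ τ) (hmeas : TauMeasImage ℓ τ)
    {K L : Set X} (hK : IsCompact K) (hL : IsCompact L) (hKL : Disjoint K L) :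
    ∃ (φ : X → ℝ) (c : ℝ), Measurable φ ∧ (∀ x, |φ x| ≤ 1) ∧ 0 ≤ c ∧ GLipWith ℓ τ c φ ∧
      (∀ x ∈ K, φ x = 1) ∧ (∀ x ∈ L, φ x = -1) := by
  obtain ⟨ρ, hρ, hρL⟩ := exists_le_infG hequi hK hL hKL
  set c : ℝ := 2 / ρ with hc
  set f : X → ℝ≥0∞ := fun x => min 2 (ENNReal.ofReal c * infG ℓ τ K x) with hf
  have hf2 : ∀ x, f x ≤ 2 := fun x => min_le_left _ _
  have hft : ∀ x, f x ≠ ⊤ := fun x => ((hf2 x).trans_lt (by simp)).ne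
  have hfr : ∀ x, (f x).toReal ≤ 2 := fun x => by
    simpa using ENNReal.toReal_mono (by simp) (hf2 x)
  have hfl : ∀ x y, f x ≤ ENNReal.ofReal c * dG ℓ τ x y + f y := by
    intro x y
    have h1 : ENNReal.ofReal c * infG ℓ τ K x ≤
        ENNReal.ofReal c * dG ℓ τ x y + ENNReal.ofReal c * infG ℓ τ K y := by
      rw [← mul_add]; gcongr; exact infG_le_dG_add hℓ hτ K x y
    rcases le_total 2 (ENNReal.ofReal c * infG ℓ τ K y) with h | h
    · simp only [hf, min_eq_left h]
      exact (min_le_left _ _).trans le_add_self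
    · simp only [hf, min_eq_right h]
      exact (min_le_right _ _).trans h1
  have hflr : ∀ x y, ENNReal.ofReal ((f x).toReal - (f y).toReal) ≤
      ENNReal.ofReal c * dG ℓ τ x y := by
    intro x y
    rw [ENNReal.ofReal_sub _ ENNReal.toReal_nonneg, ENNReal.ofReal_toReal (hft x),
      ENNReal.ofReal_toReal (hft y), tsub_le_iff_right]
    exact hfl x y
  refine ⟨fun x => 1 - (f x).toReal, c, ?_, ?_, by positivity, ?_, ?_, ?_⟩
  · exact measurable_const.sub
      ((measurable_const.min ((measurable_infG hℓ hmeas hK).const_mul _)).ennreal_toReal)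
  · intro x
    have := hfr x
    have : 0 ≤ (f x).toReal := ENNReal.toReal_nonneg
    rw [abs_le]; constructor <;> linarith
  · intro x y
    have h0 : |1 - (f x).toReal - (1 - (f y).toReal)| = |(f x).toReal - (f y).toReal| := by
      rw [← abs_neg]; congr 1; ring
    rw [h0]
    rcases abs_choice ((f x).toReal - (f y).toReal) with h | h
    · rw [h]; exact hflr x y
    · rw [h, neg_sub, dG_comm hℓ hτ]; exact hflr y x
  · intro x hx
    simp [hf, infG_eq_zero_of_mem hℓ hτ hx]
  · intro x hx
    have h2 : (2 : ℝ≥0∞) ≤ ENNReal.ofReal c * infG ℓ τ K x := by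
      calc (2 : ℝ≥0∞) = ENNReal.ofReal c * ENNReal.ofReal ρ := by
            rw [← ENNReal.ofReal_mul (by positivity), hc, div_mul_cancel₀ _ hρ.ne']; simp
        _ ≤ _ := by gcongr; exact hρL x hx
    simp only [hf, min_eq_left h2]
    norm_num

/-! ### Measures and the semigroup -/

theorem markov_one_add_mul {P : ℝ → (X → ℝ) → (X → ℝ)} (hP : IsMarkovSemigroup P) {t : ℝ}
    (ht : 0 ≤ t) {φ : X → ℝ} (hφ : IsBddBorel φ) (a : ℝ) :
    P t (fun x => 1 + a * φ x) = fun x => 1 + a * P t φ x := by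
  obtain ⟨hm, M, hM⟩ := hφ
  have hb : IsBddBorel (fun x => a * φ x) :=
    ⟨hm.const_mul a, |a| * M, fun x => by rw [abs_mul]; gcongr; exact hM x⟩
  rw [hP.add t ht (fun _ => 1) _ ⟨measurable_const, 1, by simp⟩ hb, hP.map_one t ht,
    hP.smul t ht a φ ⟨hm, M, hM⟩]

theorem markov_abs_le {P : ℝ → (X → ℝ) → (X → ℝ)} (hP : IsMarkovSemigroup P) {t : ℝ}
    (ht : 0 ≤ t) {φ : X → ℝ} (hm : Measurable φ) (hφ : ∀ x, |φ x| ≤ 1) (x : X) :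
    |P t φ x| ≤ 1 := by
  have key : ∀ a : ℝ, |a| = 1 → 0 ≤ 1 + a * P t φ x := by
    intro a ha
    have hb : ∀ y, |a * φ y| ≤ 1 := fun y => by rw [abs_mul, ha, one_mul]; exact hφ y
    have := hP.pos t ht (fun y => 1 + a * φ y)
      ⟨measurable_const.add (hm.const_mul a), 2, fun y => by
        have := abs_le.1 (hb y); rw [abs_le]; constructor <;> linarith⟩
      (fun y => by have := abs_le.1 (hb y); linarith) x
    rwa [markov_one_add_mul hP ht ⟨hm, 1, hφ⟩ a] at this
  have h1 := key 1 (by simp)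
  have h2 := key (-1) (by simp)
  rw [abs_le]; constructor <;> linarith

theorem exists_compact_seq (μ : Measure X) [IsProbabilityMeasure μ] (hμ : μ.InnerRegular)
    {A : Set X} (hA : MeasurableSet A) (hA1 : μ A = 1) :
    ∃ K : ℕ → Set X, ∀ n, K n ⊆ A ∧ IsCompact (K n) ∧ μ (K n)ᶜ ≤ (2⁻¹ : ℝ≥0∞) ^ n := by
  have : ∀ n : ℕ, ∃ K, K ⊆ A ∧ IsCompact K ∧ μ Kᶜ ≤ (2⁻¹ : ℝ≥0∞) ^ n := by
    intro n
    have hlt : 1 - (2⁻¹ : ℝ≥0∞) ^ n < μ A := by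
      rw [hA1]
      exact ENNReal.sub_lt_self (by simp) (by simp) (by simp)
    obtain ⟨K, hKA, hK, hlt⟩ := hA.exists_lt_isCompact hlt
    refine ⟨K, hKA, hK, ?_⟩
    rw [prob_compl_eq_one_sub hK.measurableSet, tsub_le_iff_right, add_comm]
    exact tsub_le_iff_right.1 hlt.le
  choose K hK using this
  exact ⟨K, hK⟩

theorem measure_eq_one_of_iUnion_subset (μ : Measure X) [IsProbabilityMeasure μ]
    {K : ℕ → Set X} (hK : ∀ n, μ (K n)ᶜ ≤ (2⁻¹ : ℝ≥0∞) ^ n) {U : Set X}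
    (hU : MeasurableSet U) (hKU : ⋃ n, K n ⊆ U) : μ U = 1 := by
  rw [← prob_compl_eq_zero_iff hU]
  refine le_antisymm ?_ bot_le
  refine ge_of_tendsto' (ENNReal.tendsto_pow_atTop_nhds_zero_of_lt_one
    (r := 2⁻¹) (by simp)) fun n => ?_
  refine (measure_mono ?_).trans (hK n)
  exact Set.compl_subset_compl.2 ((Set.subset_iUnion K n).trans hKU)

/-- If `φ n ∈ [-1, 1]` equals `a = ±1` off a set of `μ`-measure at most `2⁻ⁿ`, then by invariance
`∫ (1 - a P φ n) dμ` is summable in `n`, so `P φ n → a` almost everywhere. -/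
theorem ae_tendsto_markov {P : ℝ → (X → ℝ) → (X → ℝ)} (hP : IsMarkovSemigroup P)
    (μ : Measure X) [IsProbabilityMeasure μ] (hμ : IsInvariantMeasure P μ)
    {s : ℕ → ℝ} (hs : ∀ n, 0 ≤ s n) {φ : ℕ → X → ℝ} (hm : ∀ n, Measurable (φ n))
    (hb : ∀ n x, |φ n x| ≤ 1) {K : ℕ → Set X} (hKc : ∀ n, IsCompact (K n))
    (hK : ∀ n, μ (K n)ᶜ ≤ (2⁻¹ : ℝ≥0∞) ^ n)
    {a : ℝ} (ha : a * a = 1) (hφ : ∀ n, ∀ x ∈ K n, φ n x = a) :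
    ∀ᵐ x ∂μ, Tendsto (fun n => P (s n) (φ n) x) atTop (𝓝 a) := by
  have ha' : |a| = 1 := by
    have := abs_mul_abs_self a
    nlinarith [abs_nonneg a]
  have hbound : ∀ {y : ℝ}, |y| ≤ 1 → 0 ≤ 1 + (-a) * y ∧ 1 + (-a) * y ≤ 2 := by
    intro y hy
    have : |(-a) * y| ≤ 1 := by rw [abs_mul, abs_neg, ha', one_mul]; exact hy
    have := abs_le.1 this
    constructor <;> linarith
  have hPm : ∀ n, Measurable (P (s n) (φ n)) := fun n =>
    (hP.preserves (s n) (hs n) (φ n) ⟨hm n, 1, hb n⟩).1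
  have hPb : ∀ n x, |P (s n) (φ n) x| ≤ 1 := fun n x => markov_abs_le hP (hs n) (hm n) (hb n) x
  have hχm : ∀ n, Measurable fun x => 1 + (-a) * P (s n) (φ n) x := fun n =>
    measurable_const.add ((hPm n).const_mul _)
  have hχm' : ∀ n, Measurable fun x => 1 + (-a) * φ n x := fun n =>
    measurable_const.add ((hm n).const_mul _)
  have hbb : ∀ {y : ℝ}, |y| ≤ 1 → |1 + (-a) * y| ≤ 2 := fun hy =>
    abs_le.2 ⟨by linarith [(hbound hy).1], (hbound hy).2⟩
  have hlint : ∀ n, ∫⁻ x, ENNReal.ofReal (1 + (-a) * P (s n) (φ n) x) ∂μ ≤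
      2 * (2⁻¹ : ℝ≥0∞) ^ n := by
    intro n
    have hPint : Integrable (fun x => 1 + (-a) * P (s n) (φ n) x) μ :=
      Integrable.of_bound (hχm n).aestronglyMeasurable 2
        (Eventually.of_forall fun x => hbb (hPb n x))
    have hφint : Integrable (fun x => 1 + (-a) * φ n x) μ :=
      Integrable.of_bound (hχm' n).aestronglyMeasurable 2
        (Eventually.of_forall fun x => hbb (hb n x))
    rw [← ofReal_integral_eq_lintegral_ofReal hPint
      (Eventually.of_forall fun x => (hbound (hPb n x)).1)]
    have hinv := hμ (s n) (hs n) (fun x => 1 + (-a) * φ n x) ⟨hχm' n, 2, fun x => hbb (hb n x)⟩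
    rw [markov_one_add_mul hP (hs n) ⟨hm n, 1, hb n⟩] at hinv
    rw [hinv, ofReal_integral_eq_lintegral_ofReal hφint
      (Eventually.of_forall fun x => (hbound (hb n x)).1)]
    calc ∫⁻ x, ENNReal.ofReal (1 + (-a) * φ n x) ∂μ
        ≤ ∫⁻ x, (K n)ᶜ.indicator (fun _ => (2 : ℝ≥0∞)) x ∂μ := by
          refine lintegral_mono fun x => ?_
          by_cases hx : x ∈ K n
          · rw [hφ n x hx, neg_mul, ha]; simp
          · rw [Set.indicator_of_mem (by exact hx)]
            simpa using ENNReal.ofReal_le_ofReal (hbound (hb n x)).2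
      _ = 2 * μ (K n)ᶜ := lintegral_indicator_const (hKc n).measurableSet.compl 2
      _ ≤ _ := by gcongr; exact hK n
  have hsum : ∫⁻ x, ∑' n, ENNReal.ofReal (1 + (-a) * P (s n) (φ n) x) ∂μ ≠ ⊤ := by
    rw [lintegral_tsum fun n => (hχm n).ennreal_ofReal.aemeasurable]
    refine ne_top_of_le_ne_top ?_ (ENNReal.tsum_le_tsum hlint)
    rw [ENNReal.tsum_mul_left, ENNReal.tsum_geometric, ENNReal.one_sub_inv_two, inv_inv]
    exact ENNReal.mul_ne_top (by simp) (by simp)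
  filter_upwards [ae_lt_top (Measurable.tsum fun n => (hχm n).ennreal_ofReal) hsum]
    with x hx
  have h0 := ENNReal.tendsto_atTop_zero_of_tsum_ne_top hx.ne
  have h1 := (ENNReal.tendsto_toReal (by simp)).comp h0
  have h2 : Tendsto (fun n => 1 + (-a) * P (s n) (φ n) x) atTop (𝓝 0) := by
    refine h1.congr fun n => ?_
    exact ENNReal.toReal_ofReal (hbound (hPb n x)).1
  have h3 := (tendsto_const_nhds (x := a)).sub (h2.const_mul a)
  simp only [mul_zero, sub_zero] at h3
  refine h3.congr fun n => ?_
  linear_combination (P (s n) (φ n) x) * ha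

/-! ### The asymptotic estimate and the construction of the sets -/

/-- A point of the `d_𝓖`-closure of `A`, where `ψ n → a` on `A`, has `ψ n` eventually at distance
less than `1` from `a`. -/
theorem eventually_close {ℓ : G → ℝ} {τ : G → X → X} (hℓ : IsLength G ℓ) (hτ : IsAction G τ)
    {r : X → ℝ≥0∞} (hr : ∀ x, 0 < r x) {ε₀ C : X → G → ℝ}
    (heps : ∀ u₀ : X, ∀ g : G, ENNReal.ofReal (ℓ g) ≤ r u₀ → ε₀ u₀ g < 1 / 2)
    {ψ : ℕ → X → ℝ} {κ : ℕ → ℝ} (hκ : Tendsto κ atTop (𝓝 0))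
    (hest : ∀ u₀ g, ENNReal.ofReal (ℓ g) ≤ r u₀ → ∀ n,
      |ψ n u₀ - ψ n (τ g u₀)| ≤ 2 * ε₀ u₀ g + κ n * C u₀ g)
    {A : Set X} {a : ℝ} (hA : ∀ y ∈ A, Tendsto (fun n => ψ n y) atTop (𝓝 a))
    {x : X} (hx : infG ℓ τ A x = 0) : ∀ᶠ n in atTop, |ψ n x - a| < 1 := by
  obtain ⟨y, hy, hxy⟩ := exists_of_infG_lt (hx.trans_lt (hr x))
  rw [dG_comm hℓ hτ] at hxy
  obtain ⟨g, rfl, hg⟩ := exists_of_dG_lt hxy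
  have h1 : Tendsto (fun n => 2 * ε₀ x g + κ n * C x g + |ψ n (τ g x) - a|) atTop
      (𝓝 (2 * ε₀ x g + 0 * C x g + |a - a|)) :=
    (tendsto_const_nhds.add (hκ.mul_const _)).add ((hA _ hy).sub_const a).abs
  have hlt : 2 * ε₀ x g + 0 * C x g + |a - a| < 1 := by
    have := heps x g hg.le
    simp; linarith
  filter_upwards [h1.eventually_lt_const hlt] with n hn
  have := abs_sub_le (ψ n x) (ψ n (τ g x)) a
  have := hest x g hg.le n
  linarith

/-- The points more than twice as close to `K` as to `L` form a `d_𝓖`-open set. -/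
theorem dGOpen_lt {ℓ : G → ℝ} {τ : G → X → X} (hℓ : IsLength G ℓ) (hτ : IsAction G τ)
    (K L : Set X) : DGOpen ℓ τ {x | 2 * infG ℓ τ K x < infG ℓ τ L x} := by
  intro x hx
  simp only [Set.mem_ofPred_eq] at hx
  obtain ⟨e, he, hlt⟩ : ∃ e : ℝ≥0∞, 0 < e ∧ 2 * infG ℓ τ K x + 3 * e < infG ℓ τ L x := by
    obtain ⟨w, hw1, hw2⟩ := exists_between hx
    have hKt : 2 * infG ℓ τ K x ≠ ⊤ := hx.ne_top
    refine ⟨(w - 2 * infG ℓ τ K x) / 3, ENNReal.div_pos (tsub_pos_of_lt hw1).ne' (by simp), ?_⟩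
    rw [ENNReal.mul_div_cancel (by simp) (by simp), add_tsub_cancel_of_le hw1.le]
    exact hw2
  have het : e ≠ ⊤ := by
    rintro rfl
    simp at hlt
  refine ⟨e, he, fun y hy => ?_⟩
  have h1 := infG_le_dG_add hℓ hτ K y x
  have h2 := infG_le_dG_add hℓ hτ L x y
  rw [dG_comm hℓ hτ] at h2
  have h3 : 2 * infG ℓ τ K y + e < infG ℓ τ L y + e := by
    calc 2 * infG ℓ τ K y + e ≤ 2 * (e + infG ℓ τ K x) + e := by
          gcongr; exact h1.trans (by gcongr)
      _ = 2 * infG ℓ τ K x + 3 * e := by ring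
      _ < infG ℓ τ L x := hlt
      _ ≤ dG ℓ τ y x + infG ℓ τ L y := h2
      _ ≤ e + infG ℓ τ L y := by gcongr
      _ = _ := add_comm _ _
  exact lt_of_add_lt_add_right h3

theorem closure_lt {ℓ : G → ℝ} {τ : G → X → X} (hℓ : IsLength G ℓ) (hτ : IsAction G τ)
    {K L : Set X} {x : X} (hx : x ∈ DGClosure ℓ τ {x | 2 * infG ℓ τ K x < infG ℓ τ L x}) :
    infG ℓ τ K x ≠ ⊤ ∧ 2 * infG ℓ τ K x ≤ infG ℓ τ L x := by
  constructor
  · obtain ⟨y, hy, hxy⟩ := hx 1 one_pos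
    have hy' : infG ℓ τ K y ≠ ⊤ := by
      intro h
      simp [h] at hy
    exact ne_top_of_le_ne_top (ENNReal.add_ne_top.2 ⟨hxy.ne_top, hy'⟩)
      (infG_le_dG_add hℓ hτ K x y)
  · refine ENNReal.le_of_forall_pos_le_add fun e he _ => ?_
    obtain ⟨y, hy, hxy⟩ := hx (e / 3) (by simpa using he.ne')
    have h1 := infG_le_dG_add hℓ hτ K x y
    have h2 := infG_le_dG_add hℓ hτ L y x
    rw [dG_comm hℓ hτ] at h2
    calc 2 * infG ℓ τ K x ≤ 2 * (e / 3 + infG ℓ τ K y) := by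
          gcongr; exact h1.trans (by gcongr)
      _ = 2 * (e / 3) + 2 * infG ℓ τ K y := by ring
      _ ≤ 2 * (e / 3) + (dG ℓ τ x y + infG ℓ τ L x) := by gcongr; exact hy.le.trans h2
      _ ≤ 2 * (e / 3) + (e / 3 + infG ℓ τ L x) := by gcongr
      _ = infG ℓ τ L x + 3 * (e / 3) := by ring
      _ = infG ℓ τ L x + e := by rw [ENNReal.mul_div_cancel (by simp) (by simp)]

/-- If no point is at distance zero from both `K` and `L`, the closures of the sets
`{2 d(·, K) < d(·, L)}` and `{2 d(·, L) < d(·, K)}` are disjoint: at a common point both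
distances are finite and each is at most half of the other. -/
theorem disjoint_closures {ℓ : G → ℝ} {τ : G → X → X} (hℓ : IsLength G ℓ) (hτ : IsAction G τ)
    {K L : Set X} (hKL : ∀ x, infG ℓ τ K x = 0 → infG ℓ τ L x = 0 → False) :
    Disjoint (DGClosure ℓ τ {x | 2 * infG ℓ τ K x < infG ℓ τ L x})
      (DGClosure ℓ τ {x | 2 * infG ℓ τ L x < infG ℓ τ K x}) := by
  refine Set.disjoint_left.2 fun x h1 h2 => ?_
  obtain ⟨hKt, h1⟩ := closure_lt hℓ hτ h1
  obtain ⟨hLt, h2⟩ := closure_lt hℓ hτ h2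
  have h1' := ENNReal.toReal_mono hLt h1
  have h2' := ENNReal.toReal_mono hKt h2
  simp only [ENNReal.toReal_mul, ENNReal.toReal_ofNat] at h1' h2'
  have hK0 : 0 ≤ (infG ℓ τ K x).toReal := ENNReal.toReal_nonneg
  have hL0 : 0 ≤ (infG ℓ τ L x).toReal := ENNReal.toReal_nonneg
  refine hKL x ?_ ?_
  · exact ((ENNReal.toReal_eq_zero_iff _).1 (by linarith)).resolve_right hKt
  · exact ((ENNReal.toReal_eq_zero_iff _).1 (by linarith)).resolve_right hLt

theorem subset_dGClosure {ℓ : G → ℝ} {τ : G → X → X} (hℓ : IsLength G ℓ) (hτ : IsAction G τ)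
    (A : Set X) : A ⊆ DGClosure ℓ τ A :=
  fun x hx _ hε => ⟨x, hx, (dG_self hℓ hτ x).trans_lt hε⟩

/-- Support theorem I, part (i): if moreover `ε₀(u₀,g) < 1/2` for all `u₀` and `|g| ≤ r(u₀)`,
the sets `U₀, U₁` can be chosen so that their `d_𝓖`-closures are also disjoint. -/
theorem support_theorem_I_closures
    (ℓ : G → ℝ) (τ : G → X → X) (hℓ : IsLength G ℓ) (hτ : IsAction G τ)
    (hequi : TauEquicont ℓ τ) (hmeas : TauMeasImage ℓ τ)
    (P : ℝ → (X → ℝ) → (X → ℝ)) (hP : IsMarkovSemigroup P)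
    (t δ : ℕ → ℝ) (ε₀ C : X → G → ℝ) (r : X → ℝ≥0∞)
    (hrac : RAC ℓ τ P t δ ε₀ C r)
    (heps : ∀ u₀ : X, ∀ g : G, ENNReal.ofReal (ℓ g) ≤ r u₀ → ε₀ u₀ g < 1 / 2)
    (μ ν : Measure X) [IsProbabilityMeasure μ] [IsProbabilityMeasure ν]
    (hμreg : μ.InnerRegular) (hνreg : ν.InnerRegular)
    (hμinv : IsInvariantMeasure P μ) (hνinv : IsInvariantMeasure P ν)
    (hsing : μ ⟂ₘ ν) :
    ∃ U₀ U₁ : Set X, Disjoint U₀ U₁ ∧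
      DGOpen ℓ τ U₀ ∧ DGOpen ℓ τ U₁ ∧
      MeasurableSet U₀ ∧ MeasurableSet U₁ ∧
      μ U₀ = 1 ∧ ν U₀ = 0 ∧ μ U₁ = 0 ∧ ν U₁ = 1 ∧
      Disjoint (DGClosure ℓ τ U₀) (DGClosure ℓ τ U₁) := by
  -- Compact sets in complementary carriers, exhausting `μ` and `ν` geometrically fast.
  obtain ⟨A, hAm, hμA, hνA⟩ := hsing
  obtain ⟨K, hK⟩ := exists_compact_seq μ hμreg hAm.compl ((prob_compl_eq_one_iff hAm).2 hμA)
  obtain ⟨L, hL⟩ := exists_compact_seq ν hνreg hAm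
    ((prob_compl_eq_zero_iff hAm).1 hνA)
  have hsep := fun n => exists_separating hℓ hτ hequi hmeas (hK n).2.1 (hL n).2.1
    (Set.disjoint_of_subset (hK n).1 (hL n).1 disjoint_compl_left)
  choose φ c hφm hφb hc hφL hφK hφL' using hsep
  -- Times at which the Lipschitz term in the estimate is negligible.
  have htime : ∀ n : ℕ, ∃ m : ℕ, δ m * c n < 1 / ((n : ℝ) + 1) := by
    intro n
    have h := hrac.delta_lim.mul_const (c n)
    rw [zero_mul] at h
    exact (h.eventually_lt_const (Nat.one_div_pos_of_nat)).exists
  choose m hm using htime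
  have hκ : Tendsto (fun n => δ (m n) * c n) atTop (𝓝 0) :=
    squeeze_zero (fun n => mul_nonneg (hrac.delta_pos _).le (hc n)) (fun n => (hm n).le)
      tendsto_one_div_add_atTop_nhds_zero_nat
  set ψ : ℕ → X → ℝ := fun n => P (t (m n)) (φ n) with hψ
  have hest : ∀ u₀ g, ENNReal.ofReal (ℓ g) ≤ r u₀ → ∀ n,
      |ψ n u₀ - ψ n (τ g u₀)| ≤ 2 * ε₀ u₀ g + (δ (m n) * c n) * C u₀ g := by
    intro u g hg n
    have := hrac.estimate u g hg (φ n) ⟨hφm n, 1, hφb n⟩ 1 (hφb n) (c n) (hc n) (hφL n) (m n)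
    linarith
  have hψm : ∀ n, Measurable (ψ n) := fun n =>
    (hP.preserves _ (hrac.t_nonneg _) _ ⟨hφm n, 1, hφb n⟩).1
  have hμt := ae_tendsto_markov hP μ hμinv (fun n => hrac.t_nonneg (m n)) hφm hφb
    (fun n => (hK n).2.1) (fun n => (hK n).2.2) (a := 1) (by norm_num) hφK
  have hνt := ae_tendsto_markov hP ν hνinv (fun n => hrac.t_nonneg (m n)) hφm hφb
    (fun n => (hL n).2.1) (fun n => (hL n).2.2) (a := -1) (by norm_num) hφL'
  have hlim : ∀ a : ℝ, MeasurableSet {x | Tendsto (fun n => ψ n x) atTop (𝓝 a)} := fun a =>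
    measurableSet_tendsto _ hψm
  obtain ⟨K', hK'⟩ := exists_compact_seq μ hμreg (hlim 1)
    ((prob_compl_eq_zero_iff (hlim 1)).1 hμt)
  obtain ⟨L', hL'⟩ := exists_compact_seq ν hνreg (hlim (-1))
    ((prob_compl_eq_zero_iff (hlim (-1))).1 hνt)
  have hsepar : ∀ x, infG ℓ τ (⋃ n, K' n) x = 0 → infG ℓ τ (⋃ n, L' n) x = 0 → False := by
    intro x h1 h2
    have e1 := eventually_close hℓ hτ hrac.r_pos heps hκ hest (a := 1)
      (fun y hy => Set.iUnion_subset (fun n => (hK' n).1) hy) h1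
    have e2 := eventually_close hℓ hτ hrac.r_pos heps hκ hest (a := -1)
      (fun y hy => Set.iUnion_subset (fun n => (hL' n).1) hy) h2
    obtain ⟨n, h1, h2⟩ := (e1.and e2).exists
    have := abs_lt.1 h1
    have := abs_lt.1 h2
    linarith
  have hcl := disjoint_closures hℓ hτ hsepar
  have hd := hcl.mono (subset_dGClosure hℓ hτ _) (subset_dGClosure hℓ hτ _)
  have hKm := measurable_infG_iUnion hℓ hmeas (fun n => (hK' n).2.1)
  have hLm := measurable_infG_iUnion hℓ hmeas (fun n => (hL' n).2.1)
  have hm0 := measurableSet_lt (hKm.const_mul 2) hLm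
  have hm1 := measurableSet_lt (hLm.const_mul 2) hKm
  have hμ1 := measure_eq_one_of_iUnion_subset μ (fun n => (hK' n).2.2) hm0 (fun x hx => by
    have h0 := infG_eq_zero_of_mem hℓ hτ hx
    simpa only [Set.mem_ofPred_eq, h0, mul_zero, pos_iff_ne_zero] using hsepar x h0)
  have hν1 := measure_eq_one_of_iUnion_subset ν (fun n => (hL' n).2.2) hm1 (fun x hx => by
    have h0 := infG_eq_zero_of_mem hℓ hτ hx
    simpa only [Set.mem_ofPred_eq, h0, mul_zero, pos_iff_ne_zero] using fun h => hsepar x h h0)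
  refine ⟨_, _, hd, dGOpen_lt hℓ hτ _ _, dGOpen_lt hℓ hτ _ _, hm0, hm1, hμ1, ?_, ?_, hν1, hcl⟩
  · exact measure_mono_null hd.subset_compl_right ((prob_compl_eq_zero_iff hm1).2 hν1)
  · exact measure_mono_null hd.subset_compl_left ((prob_compl_eq_zero_iff hm0).2 hμ1)

end
end

section
/- Let X/𝓖 be the set of orbits of the action τ, π : X → X/𝓖 the canonical projection, and π_#𝓑 the projected σ-algebra on X/𝓖, i.e. E ∈ π_#𝓑 if and only if π⁻¹(E) ∈ 𝓑(X). Suppose the Markov semigroup P_t satisfies (rAC)_X with r(u₀) = ∞ for every u₀ ∈ X. Then for any two Radon probability measures μ, ν on X which are invariant for P_t, one has μ ≪ ν if and only if π_#μ ≪ π_#ν (where π_#μ denotes the pushforward of μ along π and ≪ denotes absolute continuity). -/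
/-!
Only the implication from `π_#μ ≪ π_#ν` to `μ ≪ ν` needs an argument. Let `A` be a Borel set that
carries the part of `μ` singular to `ν`: `ν A = 0` and `μ|_{Aᶜ} ≪ ν`. Suppose `μ A > 0`.

Inner regularity gives compact sets `K₁ ⊆ A` and `K₂ ⊆ Aᶜ` of almost full `μ|_A`- and `ν`-measure.
They are disjoint, so equicontinuity of the action keeps them a positive `d_𝓖`-distance apart, and
a truncated `d_𝓖`-distance to `K₁` yields a Borel `𝓖`-Lipschitz function `φ` with values in
`[-1, 1]`, equal to `1` on `K₁` and to `-1` on `K₂` (`exists_gLip_separating`). By invariance,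
`P_t 1_{K₁}` vanishes `ν`-a.e., hence `μ`-a.e. on `Aᶜ`, so all its `μ`-mass sits on `A`. Therefore
`P_t φ` is close to `1` in `L¹(μ|_A)` and to `-1` in `L¹(ν)`, uniformly in `t`
(`exists_gLip_almost_separating`).

Take a sequence of such `φ_m` with errors `2⁻ᵐ`, and then times `t_{n_m}` with
`δ_{n_m} ‖φ_m‖_{𝓖-Lip} < 2⁻ᵐ`. Then `P_{t_{n_m}} φ_m` tends to `1` at `μ`-a.e. point of `A` and to
`-1` at `ν`-a.e. point. Two points of one orbit cannot show these two behaviours, since `(rAC)_X`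
would give `2 ≤ 2 ε₀ < 2` in the limit. So a compact set `K` of positive `μ`-measure on which the
limit is `1` has a `ν`-null saturation. That saturation is Borel and invariant, so the hypothesis
on the projected measures makes it `μ`-null, a contradiction.
-/

open MeasureTheory ENNReal Filter Topology

section

variable {X : Type*} [MetricSpace X] [MeasurableSpace X] [BorelSpace X]
variable {G : Type*} [Group G]

/-! ### Positivity and linearity of the semigroup -/

lemma IsBddBorel.const {X : Type*} [MeasurableSpace X] (c : ℝ) : IsBddBorel (fun _ : X => c) :=
  ⟨measurable_const, |c|, fun _ => le_rfl⟩

lemma IsBddBorel.indicator_one {X : Type*} [MeasurableSpace X] {A : Set X}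
    (hA : MeasurableSet A) : IsBddBorel (A.indicator (fun _ => (1 : ℝ))) := by
  refine ⟨measurable_const.indicator hA, 1, fun x => ?_⟩
  by_cases hx : x ∈ A <;> simp [hx]

lemma IsBddBorel.affine {X : Type*} [MeasurableSpace X] {φ : X → ℝ} (hφ : IsBddBorel φ)
    (a b : ℝ) : IsBddBorel (fun x => a * φ x + b) := by
  obtain ⟨hm, M, hM⟩ := hφ
  refine ⟨(hm.const_mul a).add_const b, |a| * M + |b|, fun x => ?_⟩
  calc |a * φ x + b| ≤ |a * φ x| + |b| := abs_add_le _ _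
    _ ≤ |a| * M + |b| := by
      rw [abs_mul]
      gcongr
      exact hM x

lemma IsBddBorel.integrable {X : Type*} [MeasurableSpace X] {φ : X → ℝ} (hφ : IsBddBorel φ)
    (μ : Measure X) [IsFiniteMeasure μ] : Integrable φ μ := by
  obtain ⟨hm, M, hM⟩ := hφ
  exact Integrable.of_bound hm.aestronglyMeasurable M (Eventually.of_forall hM)

lemma IsMarkovSemigroup.apply_affine {X : Type*} [MeasurableSpace X]
    {P : ℝ → (X → ℝ) → (X → ℝ)} (hP : IsMarkovSemigroup P) {t : ℝ} (ht : 0 ≤ t)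
    {φ : X → ℝ} (hφ : IsBddBorel φ) (a b : ℝ) (x : X) :
    P t (fun x => a * φ x + b) x = a * P t φ x + b := by
  have h1 : IsBddBorel (fun x => a * φ x) := by simpa using hφ.affine a 0
  have h2 := hP.smul t ht b (fun _ => 1) (IsBddBorel.const 1)
  have h3 := hP.add t ht _ _ h1 (IsBddBorel.const b)
  rw [h3, hP.smul t ht a φ hφ]
  simp only [mul_one, hP.map_one t ht] at h2
  simp [h2]

lemma IsMarkovSemigroup.mono {X : Type*} [MeasurableSpace X]
    {P : ℝ → (X → ℝ) → (X → ℝ)} (hP : IsMarkovSemigroup P) {t : ℝ} (ht : 0 ≤ t)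
    {φ ψ : X → ℝ} (hφ : IsBddBorel φ) (hψ : IsBddBorel ψ) (h : ∀ x, φ x ≤ ψ x) (x : X) :
    P t φ x ≤ P t ψ x := by
  have h1 : IsBddBorel (fun x => (-1) * φ x) := by simpa using hφ.affine (-1) 0
  have h2 : IsBddBorel (fun x => ψ x + (-1) * φ x) := by
    obtain ⟨M, hM⟩ := h1.2
    obtain ⟨N, hN⟩ := hψ.2
    exact ⟨hψ.1.add h1.1, N + M, fun x => (abs_add_le _ _).trans (add_le_add (hN x) (hM x))⟩
  have h3 := hP.pos t ht _ h2 (fun x => by linarith [h x]) x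
  rw [hP.add t ht _ _ hψ h1, hP.smul t ht _ _ hφ] at h3
  linarith

lemma IsMarkovSemigroup.le_one {X : Type*} [MeasurableSpace X]
    {P : ℝ → (X → ℝ) → (X → ℝ)} (hP : IsMarkovSemigroup P) {t : ℝ} (ht : 0 ≤ t)
    {φ : X → ℝ} (hφ : IsBddBorel φ) (h : ∀ x, φ x ≤ 1) (x : X) : P t φ x ≤ 1 := by
  have := hP.mono ht hφ (IsBddBorel.const 1) h x
  rwa [hP.map_one t ht] at this

/-! ### Separating compact sets by `𝓖`-Lipschitz functions -/

/-- The `𝓖`-distance from `x` to `K`: the infimum of `|g|` over all `g` that move `x` into `K`. -/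
noncomputable def dGSet (ℓ : G → ℝ) (τ : G → X → X) (K : Set X) (x : X) : ℝ≥0∞ :=
  ⨅ (g : G) (_ : τ g x ∈ K), ENNReal.ofReal (ℓ g)

lemma mem_thickening_iff {X G : Type*} [Group G] {ℓ : G → ℝ} {τ : G → X → X}
    (hℓ : IsLength G ℓ) (hτ : IsAction G τ)
    (K : Set X) (r : ℝ) (x : X) :
    x ∈ (⋃ (g : G) (_ : ℓ g ≤ r), τ g '' K) ↔ ∃ g : G, ℓ g ≤ r ∧ τ g x ∈ K := by
  simp only [Set.mem_iUnion, Set.mem_image, exists_prop]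
  constructor
  · rintro ⟨g, hg, y, hy, rfl⟩
    refine ⟨g⁻¹, by rwa [hℓ.inv], ?_⟩
    rwa [← hτ.mul, inv_mul_cancel, hτ.one]
  · rintro ⟨g, hg, hx⟩
    refine ⟨g⁻¹, by rwa [hℓ.inv], _, hx, ?_⟩
    rw [← hτ.mul, inv_mul_cancel, hτ.one]

lemma dGSet_smul_le {X G : Type*} [Group G] {ℓ : G → ℝ} {τ : G → X → X}
    (hℓ : IsLength G ℓ) (hτ : IsAction G τ)
    (K : Set X) (g : G) (x : X) :
    dGSet ℓ τ K (τ g x) ≤ ENNReal.ofReal (ℓ g) + dGSet ℓ τ K x := by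
  unfold dGSet
  simp only [ENNReal.add_iInf]
  refine le_iInf₂ fun h hh => ?_
  refine (iInf₂_le (h * g⁻¹) ?_).trans ?_
  · rw [← hτ.mul, inv_mul_cancel_right]
    exact hh
  · rw [← ENNReal.ofReal_add (hℓ.nonneg _) (hℓ.nonneg _)]
    refine ENNReal.ofReal_le_ofReal ?_
    have := hℓ.mul_le h g⁻¹
    rw [hℓ.inv] at this
    linarith

lemma measurable_dGSet {X G : Type*} [MetricSpace X] [MeasurableSpace X] [Group G]
    {ℓ : G → ℝ} {τ : G → X → X} (hℓ : IsLength G ℓ) (hτ : IsAction G τ)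
    (hmeas : TauMeasImage ℓ τ) {K : Set X} (hK : IsCompact K) :
    Measurable (dGSet ℓ τ K) := by
  refine measurable_of_Iio fun a => ?_
  have : dGSet ℓ τ K ⁻¹' Set.Iio a =
      ⋃ (q : ℚ) (_ : 0 ≤ (q : ℝ) ∧ ENNReal.ofReal q < a),
        ⋃ (g : G) (_ : ℓ g ≤ (q : ℝ)), τ g '' K := by
    ext x
    rw [Set.mem_iUnion₂]
    simp only [mem_thickening_iff hℓ hτ, Set.mem_preimage, Set.mem_Iio, dGSet, iInf_lt_iff]
    constructor
    · rintro ⟨g, hg, hlt⟩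
      obtain ⟨q, hq, h1, h2⟩ := ENNReal.lt_iff_exists_rat_btwn.1 hlt
      refine ⟨q, ⟨by exact_mod_cast hq, h2⟩, g, ?_, hg⟩
      exact (ENNReal.ofReal_lt_ofReal_iff'.1 h1).1.le
    · rintro ⟨q, ⟨_, hqa⟩, g, hg, hgx⟩
      exact ⟨g, hgx, (ENNReal.ofReal_le_ofReal hg).trans_lt hqa⟩
  rw [this]
  exact MeasurableSet.iUnion fun q => MeasurableSet.iUnion fun hq => hmeas q hq.1 K hK

lemma gLipWith_of_forall {X G : Type*} {ℓ : G → ℝ} {τ : G → X → X} {c : ℝ} (hc : 0 < c)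
    {φ : X → ℝ}
    (h : ∀ g x, |φ (τ g x) - φ x| ≤ c * ℓ g) : GLipWith ℓ τ c φ := by
  intro x y
  unfold dG
  have hc0 : ENNReal.ofReal c ≠ 0 := by simpa using hc
  simp only [ENNReal.mul_iInf_of_ne hc0 ENNReal.ofReal_ne_top]
  refine le_iInf₂ fun g hg => ?_
  subst hg
  rw [← ENNReal.ofReal_mul hc.le]
  exact ENNReal.ofReal_le_ofReal (h g y)

/-- Urysohn-type lemma: disjoint compact sets are a positive `d_𝓖`-distance apart by
equicontinuity, so a truncation of `1 - d_𝓖(·, K₁)/ρ` separates them. The function takes values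
in `[-1, 1]` to match the factor `2` in `(rAC)_X`. -/
lemma exists_gLip_separating {X G : Type*} [MetricSpace X] [MeasurableSpace X] [Group G]
    {ℓ : G → ℝ} {τ : G → X → X} (hℓ : IsLength G ℓ) (hτ : IsAction G τ) (hequi : TauEquicont ℓ τ) (hmeas : TauMeasImage ℓ τ)
    {K₁ K₂ : Set X} (h₁ : IsCompact K₁) (h₂ : IsCompact K₂) (hd : Disjoint K₁ K₂) :
    ∃ (φ : X → ℝ) (c : ℝ), 0 < c ∧ IsBddBorel φ ∧ (∀ x, |φ x| ≤ 1) ∧ GLipWith ℓ τ c φ ∧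
      (∀ x ∈ K₁, φ x = 1) ∧ (∀ x ∈ K₂, φ x = -1) := by
  obtain ⟨ε, hε, hdist⟩ := Metric.exists_pos_forall_lt_edist h₁ h₂.isClosed hd
  obtain ⟨ρ, hρ, hρd⟩ := hequi K₂ h₂ ε (by exact_mod_cast hε)
  set D := dGSet ℓ τ K₁ with hD
  set f : X → ℝ := fun x => (min (ENNReal.ofReal ρ) (D x)).toReal with hf
  have hne : ∀ x, min (ENNReal.ofReal ρ) (D x) ≠ ⊤ := fun x =>
    ne_top_of_le_ne_top ENNReal.ofReal_ne_top (min_le_left _ _)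
  have hfm : Measurable f :=
    (measurable_const.min (measurable_dGSet hℓ hτ hmeas h₁)).ennreal_toReal
  have hf0 : ∀ x, 0 ≤ f x := fun x => ENNReal.toReal_nonneg
  have hfρ : ∀ x, f x ≤ ρ := fun x => by
    have := ENNReal.toReal_mono ENNReal.ofReal_ne_top (min_le_left (ENNReal.ofReal ρ) (D x))
    rwa [ENNReal.toReal_ofReal hρ.le] at this
  have hfl : ∀ g x, f (τ g x) ≤ ℓ g + f x := fun g x => by
    have h1 : min (ENNReal.ofReal ρ) (D (τ g x)) ≤
        ENNReal.ofReal (ℓ g) + min (ENNReal.ofReal ρ) (D x) := by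
      rw [← min_add_add_left]
      exact min_le_min le_add_self (dGSet_smul_le hℓ hτ K₁ g x)
    have h2 := ENNReal.toReal_mono (ENNReal.add_ne_top.2 ⟨ENNReal.ofReal_ne_top, hne x⟩) h1
    rwa [ENNReal.toReal_add ENNReal.ofReal_ne_top (hne x),
      ENNReal.toReal_ofReal (hℓ.nonneg g)] at h2
  have hfa : ∀ g x, |f (τ g x) - f x| ≤ ℓ g := fun g x => by
    have h1 := hfl g x
    have h2 := hfl g⁻¹ (τ g x)
    rw [← hτ.mul, inv_mul_cancel, hτ.one, hℓ.inv] at h2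
    rw [abs_le]
    constructor <;> linarith
  have hb : ∀ x, |1 - 2 / ρ * f x| ≤ 1 := fun x => by
    have h1 : 0 ≤ 2 / ρ * f x := mul_nonneg (by positivity) (hf0 x)
    have h2 : 2 / ρ * f x ≤ 2 := by
      calc 2 / ρ * f x ≤ 2 / ρ * ρ := by gcongr; exact hfρ x
        _ = 2 := by field_simp
    rw [abs_le]
    constructor <;> linarith
  refine ⟨fun x => 1 - 2 / ρ * f x, 2 / ρ, by positivity,
    ⟨(hfm.const_mul _).const_sub _, 1, hb⟩, hb, ?_, ?_, ?_⟩
  · refine gLipWith_of_forall (by positivity) fun g x => ?_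
    have : 1 - 2 / ρ * f (τ g x) - (1 - 2 / ρ * f x) = -(2 / ρ * (f (τ g x) - f x)) := by ring
    rw [this, abs_neg, abs_mul, abs_of_pos (by positivity : 0 < 2 / ρ)]
    gcongr
    exact hfa g x
  · intro x hx
    have : D x ≤ ENNReal.ofReal (ℓ 1) := iInf₂_le (1 : G) (by rwa [hτ.one])
    rw [(hℓ.eq_zero_iff 1).2 rfl, ENNReal.ofReal_zero, nonpos_iff_eq_zero] at this
    simp [hf, this]
  · intro x hx
    have : ENNReal.ofReal ρ ≤ D x := by
      refine le_iInf₂ fun g hg => ENNReal.ofReal_le_ofReal ?_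
      by_contra! hlt
      have h1 := hρd x hx g hlt.le
      have h2 := hdist _ hg x hx
      rw [edist_dist, dist_comm, ENNReal.lt_ofReal_iff_toReal_lt ENNReal.coe_ne_top] at h2
      simp only [ENNReal.coe_toReal] at h2
      linarith
    have h3 : f x = ρ := by
      simp only [hf, min_eq_left this, ENNReal.toReal_ofReal hρ.le]
    simp only [h3]
    field_simp
    norm_num

/-! ### Almost separating the two measures -/

/-- A nonnegative sequence with summable integrals tends to zero almost everywhere. -/
lemma ae_tendsto_zero_of_integral_le {X : Type*} [MeasurableSpace X] {κ : Measure X}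
    {f : ℕ → X → ℝ} (hf : ∀ n, Integrable (f n) κ) (h0 : ∀ n x, 0 ≤ f n x)
    (hle : ∀ n, ∫ x, f n x ∂κ ≤ (1 / 2) ^ n) :
    ∀ᵐ x ∂κ, Tendsto (fun n => f n x) atTop (𝓝 0) := by
  have hm : ∀ n, AEMeasurable (fun x => ENNReal.ofReal (f n x)) κ := fun n =>
    (hf n).aestronglyMeasurable.aemeasurable.ennreal_ofReal
  have hsum : ∫⁻ x, ∑' n, ENNReal.ofReal (f n x) ∂κ ≠ ⊤ := by
    rw [lintegral_tsum hm]
    refine ne_top_of_le_ne_top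
      (summable_geometric_two.tsum_ofReal_ne_top) (ENNReal.tsum_le_tsum fun n => ?_)
    rw [← ofReal_integral_eq_lintegral_ofReal (hf n) (Eventually.of_forall (h0 n))]
    exact ENNReal.ofReal_le_ofReal (hle n)
  filter_upwards [ae_lt_top' (AEMeasurable.tsum hm) hsum] with x hx
  have h1 := ENNReal.tendsto_atTop_zero_of_tsum_ne_top hx.ne
  have h2 := (ENNReal.tendsto_toReal ENNReal.zero_ne_top).comp h1
  simpa [Function.comp_def, ENNReal.toReal_ofReal (h0 _ x)] using h2

/-- Since `ν A = 0` and `μ` restricted to `Aᶜ` is absolutely continuous with respect to `ν`,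
no mass flows from `Aᶜ` into `A`; so `P_t` of a function close to `1` on `A` and to `-1` on
`Aᶜ` stays so, uniformly in `t`. -/
lemma exists_gLip_almost_separating {ℓ : G → ℝ} {τ : G → X → X} (hℓ : IsLength G ℓ)
    (hτ : IsAction G τ) (hequi : TauEquicont ℓ τ) (hmeas : TauMeasImage ℓ τ)
    {P : ℝ → (X → ℝ) → (X → ℝ)} (hP : IsMarkovSemigroup P)
    {μ ν : Measure X} [IsProbabilityMeasure μ] [IsProbabilityMeasure ν]
    (hμreg : μ.InnerRegular) (hνreg : ν.InnerRegular)
    (hμinv : IsInvariantMeasure P μ) (hνinv : IsInvariantMeasure P ν)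
    {A : Set X} (hA : MeasurableSet A) (hνA : ν A = 0) (hμA : μ.restrict Aᶜ ≪ ν)
    {η : ℝ} (hη : 0 < η) :
    ∃ (φ : X → ℝ) (c : ℝ), 0 < c ∧ IsBddBorel φ ∧ (∀ x, |φ x| ≤ 1) ∧ GLipWith ℓ τ c φ ∧
      ∀ t, 0 ≤ t → ∫ x in A, (1 - P t φ x) ∂μ ≤ η ∧ ∫ x, (1 + P t φ x) ∂ν ≤ η := by
  have hη2 : ENNReal.ofReal (η / 2) ≠ 0 := by simpa using hη
  obtain ⟨K₁, hK₁A, hK₁, hμK⟩ := hA.exists_isCompact_sdiff_lt (measure_ne_top μ A) hη2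
  obtain ⟨K₂, hK₂A, hK₂, hνK⟩ :=
    hA.compl.exists_isCompact_sdiff_lt (measure_ne_top ν Aᶜ) hη2
  obtain ⟨φ, c, hc, hφ, hφ1, hlip, hφK₁, hφK₂⟩ := exists_gLip_separating hℓ hτ hequi hmeas
    hK₁ hK₂ (Set.disjoint_of_subset hK₁A hK₂A disjoint_compl_right)
  refine ⟨φ, c, hc, hφ, hφ1, hlip, fun t ht => ⟨?_, ?_⟩⟩
  · set χ : X → ℝ := K₁.indicator (fun _ => 1) with hχ
    have hχb : IsBddBorel χ := IsBddBorel.indicator_one hK₁.measurableSet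
    have hχ0 : ∀ x, 0 ≤ χ x := Set.indicator_nonneg fun _ _ => zero_le_one
    have hPχb := hP.preserves t ht χ hχb
    have hPχ0 := hP.pos t ht χ hχb hχ0
    have hlow : ∀ x, 2 * P t χ x + (-1) ≤ P t φ x := fun x => by
      rw [← hP.apply_affine ht hχb]
      refine hP.mono ht (hχb.affine _ _) hφ (fun y => ?_) x
      by_cases hy : y ∈ K₁
      · simp [hχ, hy, hφK₁ y hy]
        norm_num
      · simpa [hχ, hy] using (abs_le.1 (hφ1 y)).1
    have hχint : ∀ κ : Measure X, ∫ x, χ x ∂κ = κ.real K₁ := fun κ =>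
      integral_indicator_one hK₁.measurableSet
    have hzero : ∫ x in Aᶜ, P t χ x ∂μ = 0 := by
      have h0 : P t χ =ᵐ[ν] 0 := by
        rw [← integral_eq_zero_iff_of_nonneg hPχ0 (hPχb.integrable ν), hνinv t ht χ hχb,
          hχint, measureReal_def, measure_mono_null hK₁A hνA, ENNReal.toReal_zero]
      exact integral_eq_zero_of_ae (hμA.ae_le h0)
    have hAχ : ∫ x in A, P t χ x ∂μ = μ.real K₁ := by
      have h1 := integral_add_compl hA (hPχb.integrable μ)
      rwa [hzero, add_zero, hμinv t ht χ hχb, hχint] at h1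
    have hdiff : μ.real A - μ.real K₁ ≤ η / 2 := by
      rw [← measureReal_sdiff hK₁A hK₁.measurableSet, measureReal_def]
      exact ENNReal.toReal_le_of_le_ofReal (by positivity) hμK.le
    have hi := hPχb.integrable (μ.restrict A)
    calc ∫ x in A, (1 - P t φ x) ∂μ ≤ ∫ x in A, (2 - 2 * P t χ x) ∂μ := by
          refine integral_mono ?_ ?_ fun x => ?_
          · exact (integrable_const _).sub ((hP.preserves t ht φ hφ).integrable _)
          · exact (integrable_const _).sub (hi.const_mul 2)
          · have := hlow x
            dsimp only
            linarith
      _ = 2 * (μ.real A - μ.real K₁) := by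
          rw [integral_sub (integrable_const _) (hi.const_mul 2), integral_const_mul, hAχ]
          simp
          ring
      _ ≤ η := by linarith
  · have hPφ := (hP.preserves t ht φ hφ).integrable ν
    rw [integral_add (integrable_const _) hPφ, hνinv t ht φ hφ,
      ← integral_add (integrable_const _) (hφ.integrable ν)]
    have hnull : ν.real K₂ᶜ ≤ η / 2 := by
      refine ENNReal.toReal_le_of_le_ofReal (by positivity) (le_trans ?_ hνK.le)
      refine (measure_mono (t := A ∪ (Aᶜ \ K₂)) fun x hx => ?_).trans
        ((measure_union_le _ _).trans_eq (by rw [hνA, zero_add]))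
      by_cases hxA : x ∈ A
      · exact Or.inl hxA
      · exact Or.inr ⟨hxA, hx⟩
    have hm := hK₂.measurableSet.compl
    calc ∫ x, (1 + φ x) ∂ν ≤ ∫ x, 2 * K₂ᶜ.indicator (fun _ => (1 : ℝ)) x ∂ν := by
          refine integral_mono ((integrable_const _).add (hφ.integrable ν))
            (((IsBddBorel.indicator_one hm).integrable ν).const_mul 2) fun x => ?_
          by_cases hx : x ∈ K₂
          · simp [hx, hφK₂ x hx]
          · have := (abs_le.1 (hφ1 x)).2
            simp [hx]
            linarith
      _ = 2 * ν.real K₂ᶜ := by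
          rw [integral_const_mul]
          congr 1
          exact integral_indicator_one hm
      _ ≤ η := by linarith

/-- Lebesgue decomposition in terms of sets: `A` carries the part of `μ` singular to `ν`. -/
lemma exists_singular_set {X : Type*} [MeasurableSpace X] (μ ν : Measure X)
    [IsFiniteMeasure μ] [IsFiniteMeasure ν] :
    ∃ A, MeasurableSet A ∧ ν A = 0 ∧ μ.restrict Aᶜ ≪ ν := by
  obtain ⟨S, hS, hS1, hS2⟩ := Measure.mutuallySingular_singularPart μ ν
  refine ⟨Sᶜ, hS.compl, hS2, ?_⟩
  rw [compl_compl]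
  have h : μ.restrict S = (ν.withDensity (μ.rnDeriv ν)).restrict S := by
    conv_lhs => rw [← Measure.singularPart_add_rnDeriv μ ν]
    rw [Measure.restrict_add, Measure.restrict_eq_zero.2 hS1, zero_add]
  rw [h]
  exact Measure.restrict_le_self.absolutelyContinuous.trans (withDensity_absolutelyContinuous _ _)

/-- Support theorem II (absolute continuity): with `X/𝓖`, `π` and the projected σ-algebra as
before, if `P_t` satisfies `(rAC)_X` with `r(u₀) = ∞` for every `u₀`, then for invariant
Radon probability measures `μ, ν`: `μ ≪ ν ↔ π_#μ ≪ π_#ν`. -/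
theorem support_theorem_II_absolutelyContinuous
    (ℓ : G → ℝ) (τ : G → X → X) (hℓ : IsLength G ℓ) (hτ : IsAction G τ)
    (hequi : TauEquicont ℓ τ) (hmeas : TauMeasImage ℓ τ)
    (P : ℝ → (X → ℝ) → (X → ℝ)) (hP : IsMarkovSemigroup P)
    (t δ : ℕ → ℝ) (ε₀ C : X → G → ℝ) (r : X → ℝ≥0∞)
    (hrac : RAC ℓ τ P t δ ε₀ C r)
    (hr : ∀ u₀ : X, r u₀ = ⊤)
    (s : Setoid X) (hs : ∀ x y : X, s.r x y ↔ ∃ g : G, x = τ g y)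
    (μ ν : Measure X) [IsProbabilityMeasure μ] [IsProbabilityMeasure ν]
    (hμreg : μ.InnerRegular) (hνreg : ν.InnerRegular)
    (hμinv : IsInvariantMeasure P μ) (hνinv : IsInvariantMeasure P ν) :
    μ ≪ ν ↔ μ.map (Quotient.mk s) ≪ ν.map (Quotient.mk s) := by
  have hπ : Measurable (Quotient.mk s) := measurable_quotient_mk'
  refine ⟨fun h => h.map hπ, fun h => ?_⟩
  obtain ⟨A, hA, hνA, hμA⟩ := exists_singular_set μ ν
  suffices hμA0 : μ A = 0 by
    refine Measure.AbsolutelyContinuous.mk fun B hB hνB => ?_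
    have h1 : μ (B ∩ Aᶜ) = 0 := by
      rw [← Measure.restrict_apply hB]
      exact hμA hνB
    refine measure_mono_null (t := A ∪ B ∩ Aᶜ) (fun x hx => ?_) (measure_union_null hμA0 h1)
    by_cases hxA : x ∈ A
    · exact Or.inl hxA
    · exact Or.inr ⟨hx, hxA⟩
  by_contra hμA0
  have key := fun m : ℕ => exists_gLip_almost_separating hℓ hτ hequi hmeas hP hμreg hνreg
    hμinv hνinv hA hνA hμA (η := (1 / 2) ^ m) (by positivity)
  choose φ c hc hφ hφ1 hlip hint using key
  -- The times may be taken so far out that the Lipschitz constants no longer matter.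
  have htime : ∀ m : ℕ, ∃ n, δ n * c m < (1 / 2) ^ m := fun m => by
    have h1 : Tendsto (fun n => δ n * c m) atTop (𝓝 0) := by
      simpa using hrac.delta_lim.mul_const (c m)
    exact (h1.eventually_lt_const (by positivity)).exists
  choose n hn using htime
  set a : ℕ → X → ℝ := fun m => P (t (n m)) (φ m) with ha
  have ht : ∀ m, 0 ≤ t (n m) := fun m => hrac.t_nonneg _
  have hab : ∀ m, IsBddBorel (a m) := fun m => hP.preserves _ (ht m) _ (hφ m)
  have hle : ∀ m x, a m x ≤ 1 := fun m =>
    hP.le_one (ht m) (hφ m) fun x => (abs_le.1 (hφ1 m x)).2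
  have hge : ∀ m x, -1 ≤ a m x := fun m x => by
    have h1 : IsBddBorel (fun x => (-1) * φ m x + 0) := (hφ m).affine _ _
    have h2 := hP.le_one (ht m) h1 (fun y => by linarith [(abs_le.1 (hφ1 m y)).1]) x
    rw [hP.apply_affine (ht m) (hφ m)] at h2
    simp only [ha]
    linarith
  have hμlim : ∀ᵐ x ∂(μ.restrict A), Tendsto (fun m => 1 - a m x) atTop (𝓝 0) :=
    ae_tendsto_zero_of_integral_le
      (fun m => (integrable_const _).sub ((hab m).integrable _))
      (fun m x => by linarith [hle m x]) fun m => (hint m _ (ht m)).1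
  have hνlim : ∀ᵐ x ∂ν, Tendsto (fun m => 1 + a m x) atTop (𝓝 0) :=
    ae_tendsto_zero_of_integral_le
      (fun m => (integrable_const _).add ((hab m).integrable _))
      (fun m x => by linarith [hge m x]) fun m => (hint m _ (ht m)).2
  set E : Set X := {x | Tendsto (fun m => 1 - a m x) atTop (𝓝 0)} with hE
  have hEm : MeasurableSet E :=
    measurableSet_tendsto (𝓝 0) fun m => (hab m).1.const_sub 1
  have hEA : 0 < μ (E ∩ A) := by
    have h1 : μ.restrict A Eᶜ = 0 := hμlim
    rw [Measure.restrict_apply hEm.compl] at h1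
    refine pos_iff_ne_zero.2 fun h2 => hμA0 ?_
    refine measure_mono_null (fun x hx => ?_) (measure_union_null h2 h1)
    by_cases hxE : x ∈ E
    · exact Or.inl ⟨hxE, hx⟩
    · exact Or.inr ⟨hxE, hx⟩
  obtain ⟨K, hKE, hK, hμK⟩ := (hEm.inter hA).exists_lt_isCompact hEA
  -- The saturation of the compact set `K` is Borel, as a countable union of thickenings.
  set S : Set X := ⋃ k : ℕ, ⋃ (g : G) (_ : ℓ g ≤ (k : ℝ)), τ g '' K with hS
  have hSm : MeasurableSet S := MeasurableSet.iUnion fun k => hmeas k k.cast_nonneg K hK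
  have hSmem : ∀ x, x ∈ S ↔ ∃ g : G, τ g x ∈ K := fun x => by
    simp only [hS, Set.mem_iUnion (s := fun k : ℕ => _), mem_thickening_iff hℓ hτ]
    constructor
    · rintro ⟨k, g, -, hg⟩
      exact ⟨g, hg⟩
    · rintro ⟨g, hg⟩
      obtain ⟨k, hk⟩ := exists_nat_ge (ℓ g)
      exact ⟨k, g, hk, hg⟩
  have hSsat : Quotient.mk s ⁻¹' (Quotient.mk s '' S) = S := by
    refine Set.Subset.antisymm ?_ (Set.subset_preimage_image _ _)
    rintro x ⟨y, hy, hyx⟩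
    obtain ⟨g, hg⟩ := (hs y x).1 (Quotient.exact hyx)
    obtain ⟨k, hk⟩ := (hSmem y).1 hy
    rw [hSmem]
    exact ⟨k * g, by rwa [hτ.mul, ← hg]⟩
  have hνS : ν S = 0 := by
    refine measure_mono_null (t := {y | ¬ Tendsto (fun m => 1 + a m y) atTop (𝓝 0)}) ?_ hνlim
    intro y hy hylim
    obtain ⟨g, hg⟩ := (hSmem y).1 hy
    have hx : Tendsto (fun m => 1 - a m (τ g y)) atTop (𝓝 0) := (hKE hg).1
    set x := τ g y with hxdef
    have hyx : τ g⁻¹ x = y := by rw [hxdef, ← hτ.mul, inv_mul_cancel, hτ.one]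
    have hrx : ENNReal.ofReal (ℓ g⁻¹) ≤ r x := by rw [hr]; exact le_top
    have hest : ∀ m, a m x - a m y ≤
        2 * ε₀ x g⁻¹ + δ (n m) * c m * C x g⁻¹ := fun m => by
      have := hrac.estimate x g⁻¹ hrx (φ m) (hφ m) 1 (hφ1 m) (c m) (hc m).le (hlip m) (n m)
      rw [hyx] at this
      calc a m x - a m y ≤ |a m x - a m y| := le_abs_self _
        _ ≤ 2 * ε₀ x g⁻¹ * 1 + δ (n m) * C x g⁻¹ * c m := this
        _ = 2 * ε₀ x g⁻¹ + δ (n m) * c m * C x g⁻¹ := by ring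
    have hδc : Tendsto (fun m => δ (n m) * c m) atTop (𝓝 0) :=
      squeeze_zero (fun m => (mul_pos (hrac.delta_pos _) (hc m)).le) (fun m => (hn m).le)
        (tendsto_pow_atTop_nhds_zero_of_lt_one (by norm_num) (by norm_num))
    have hleft : Tendsto (fun m => a m x - a m y) atTop (𝓝 2) := by
      have h1 := (hx.add hylim).const_sub 2
      simp only [add_zero, sub_zero] at h1
      refine h1.congr fun m => ?_
      ring
    have hright := (hδc.mul_const (C x g⁻¹)).const_add (2 * ε₀ x g⁻¹)
    have h2 := le_of_tendsto_of_tendsto' hleft hright hest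
    have h3 := hrac.eps_lt_one x g⁻¹ hrx
    linarith
  have hQm : MeasurableSet (Quotient.mk s '' S) := by
    rw [measurableSet_quotient]
    change MeasurableSet (Quotient.mk s ⁻¹' (Quotient.mk s '' S))
    rwa [hSsat]
  have hμS : μ S = 0 := by
    have h1 := @h (Quotient.mk s '' S)
    rw [Measure.map_apply hπ hQm, Measure.map_apply hπ hQm, hSsat] at h1
    exact h1 hνS
  refine hμK.ne' (measure_mono_null (fun x hx => ?_) hμS)
  exact (hSmem x).2 ⟨1, by rwa [hτ.one]⟩

end
end
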